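/- If 𝒰 is a finitely closed class of graphs all of whose members are pre-partitionable, then every graph in the Schmidt closure of 𝒰 is pre-partitionable. -/

import Mathlib

open Cardinal

/-- A vertex `x` is happy in the two-colouring `π` of `G` if it has at least as many
neighbours in the opposite class as in its own class (as cardinals). -/
def Happy {V : Type*} (G : SimpleGraph V) (π : V → Bool) (x : V) : Prop :=
  #{y : V | G.Adj x y ∧ π y = π x} ≤ #{y : V | G.Adj x y ∧ π y ≠ π x}

/-- A two-colouring is unfriendly if every vertex is happy in it. -/
def Unfriendly {V : Type*} (G : SimpleGraph V) (π : V → Bool) : Prop :=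
  ∀ x : V, Happy G π x

/-- A graph is pre-partitionable if every two-colouring of any vertex subset `U` extends to a
two-colouring of the whole graph in which every vertex outside `U` is happy. -/
def PrePartitionable {V : Type*} (G : SimpleGraph V) : Prop :=
  ∀ (U : Set V) (π : U → Bool), ∃ π' : V → Bool,
    (∀ u : U, π' u = π u) ∧ ∀ x ∉ U, Happy G π' x

universe u

/-- A class of graphs: a predicate on simple graphs over arbitrary vertex types in universe `u`. -/
def GraphClass : Type (u + 1) := ∀ (V : Type u), SimpleGraph V → Prop

/-- The component graph: the subgraph of `G` induced by a connected component `C` of `G - S`. -/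
def CompGraph {V : Type u} (G : SimpleGraph V) (S : Set V)
    (C : (G.induce Sᶜ).ConnectedComponent) : SimpleGraph C.supp :=
  (G.induce Sᶜ).induce C.supp

/-- The Schmidt hierarchy: `SchmidtLevel 𝒰 0 = 𝒰`, and for `μ > 0` a graph `G` lies in
`SchmidtLevel 𝒰 μ` iff there is a finite vertex set `S` such that every component of `G - S`
lies in `SchmidtLevel 𝒰 lam` for some `lam < μ`. -/
noncomputable def SchmidtLevel (𝒰 : GraphClass.{u}) (μ : Ordinal.{u}) : GraphClass.{u} :=
  fun V G =>
    if μ = 0 then 𝒰 V G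
    else ∃ S : Set V, S.Finite ∧
      ∀ C : (G.induce Sᶜ).ConnectedComponent,
        ∃ lam : Ordinal.{u}, ∃ _ : lam < μ, SchmidtLevel 𝒰 lam C.supp (CompGraph G S C)
  termination_by μ
  decreasing_by exact ‹_›

/-- A graph belongs to the Schmidt closure of `𝒰` if it lies in some level of the hierarchy. -/
def InSchmidtClosure (𝒰 : GraphClass.{u}) {V : Type u} (G : SimpleGraph V) : Prop :=
  ∃ μ : Ordinal.{u}, SchmidtLevel 𝒰 μ V G

/-- The rank of a graph in the Schmidt closure: the least level containing it. -/
noncomputable def SchmidtRank (𝒰 : GraphClass.{u}) {V : Type u} (G : SimpleGraph V) :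
    Ordinal.{u} :=
  sInf {μ : Ordinal.{u} | SchmidtLevel 𝒰 μ V G}

/-- A class of graphs is finitely closed: it is closed under isomorphism, under finite (binary)
disjoint unions, and under adding finitely many new vertices joined arbitrarily to each other
and to the old vertices. -/
structure FinitelyClosed (𝒰 : GraphClass.{u}) : Prop where
  iso_closed : ∀ {V W : Type u} (G : SimpleGraph V) (H : SimpleGraph W),
    Nonempty (G ≃g H) → 𝒰 V G → 𝒰 W H
  sum_mem : ∀ {V W : Type u} (G : SimpleGraph V) (H : SimpleGraph W),
    𝒰 V G → 𝒰 W H → 𝒰 (V ⊕ W) (G.sum H)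
  addFinite_mem : ∀ {V : Type u} (G : SimpleGraph V) (T : Set V),
    T.Finite → 𝒰 (↑Tᶜ) (G.induce Tᶜ) → 𝒰 V G

/-!
Let `𝒱 ⊇ 𝒰` be a maximal finitely closed class of pre-partitionable graphs. The graphs that fall
apart into members of `𝒱` when finitely many vertices are deleted again form a finitely closed class
containing `𝒱`. If they are all pre-partitionable, maximality puts them back into `𝒱`, and `𝒱`
swallows the Schmidt hierarchy level by level.

So let a finite separator `S` cut `G` into pieces of which any finitely many, together with `S`,
induce a pre-partitionable graph. Vertices of `S` of uncountable degree can be added to the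
precoloured set one at a time: if such a vertex is unhappy in a colouring good elsewhere, flip it
and repair the damage, which is confined to a vertex set smaller than its degree. When `S` has only
countable degrees, an ultrafilter on the finite sets of pieces provides a colouring of `S` that is
part of solutions on arbitrarily large finite unions of pieces. Such a solution takes care of the
vertices of `S` with finitely many neighbours, or with infinitely many in some finite union of
pieces, and every other vertex of `S` can be given opponents in infinitely many further pieces.
-/

/-- The neighbours of `x` in its own colour class. -/
def friends {V : Type*} (G : SimpleGraph V) (π : V → Bool) (x : V) : Set V :=
  {y | G.Adj x y ∧ π y = π x}

/-- The neighbours of `x` in the opposite colour class. -/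
def opponents {V : Type*} (G : SimpleGraph V) (π : V → Bool) (x : V) : Set V :=
  {y | G.Adj x y ∧ π y ≠ π x}

/-- Every precolouring of `U` extends to a colouring in which every vertex outside `U` is happy.
Precolourings are encoded as colourings of all of `V`, with arbitrary values off `U`. -/
def Extendable {V : Type*} (G : SimpleGraph V) (U : Set V) : Prop :=
  ∀ π : V → Bool, ∃ p : V → Bool, Set.EqOn p π U ∧ ∀ x ∉ U, Happy G p x

section Happy

variable {V : Type*} {G : SimpleGraph V} {p q : V → Bool} {s x : V}

theorem friends_union_opponents (G : SimpleGraph V) (p : V → Bool) (x : V) :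
    friends G p x ∪ opponents G p x = G.neighborSet x := by
  ext y
  simp only [friends, opponents, Set.mem_union, Set.mem_ofPred_eq, ← and_or_left, em, and_true,
    SimpleGraph.mem_neighborSet]

theorem friends_subset_neighborSet : friends G p x ⊆ G.neighborSet x := fun _ hy => hy.1

theorem friends_subset_of_eqOn_compl {W : Set V} (hx : q x = p x) (hW : Set.EqOn q p Wᶜ) :
    friends G q x ⊆ friends G p x ∪ W := by
  rintro y ⟨hxy, hy⟩
  by_cases hyW : y ∈ W
  · exact .inr hyW
  · exact .inl ⟨hxy, by rw [← hW hyW, hy, hx]⟩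

theorem opponents_subset_of_eqOn_compl {W : Set V} (hx : q x = p x) (hW : Set.EqOn q p Wᶜ) :
    opponents G q x ⊆ opponents G p x ∪ W := by
  rintro y ⟨hxy, hy⟩
  by_cases hyW : y ∈ W
  · exact .inr hyW
  · exact .inl ⟨hxy, by rwa [← hW hyW, ← hx]⟩

theorem mk_neighborSet_le (G : SimpleGraph V) (p : V → Bool) (x : V) :
    #(G.neighborSet x) ≤ #(friends G p x) + #(opponents G p x) := by
  rw [← friends_union_opponents G p x]
  exact mk_union_le _ _

theorem Happy.mk_neighborSet_le (h : Happy G p x) :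
    #(G.neighborSet x) ≤ #(opponents G p x) + #(opponents G p x) :=
  (_root_.mk_neighborSet_le G p x).trans (add_le_add_left h _)

theorem Happy.infinite_opponents (h : Happy G p x) (hx : (G.neighborSet x).Infinite) :
    (opponents G p x).Infinite := by
  contrapose! hx
  rw [← lt_aleph0_iff_set_finite] at hx ⊢
  exact h.mk_neighborSet_le.trans_lt (add_lt_aleph0 hx hx)

theorem Happy.lt_mk_opponents {κ : Cardinal} (hκ : ℵ₀ ≤ κ) (h : Happy G p x)
    (hx : κ < #(G.neighborSet x)) : κ < #(opponents G p x) := by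
  contrapose! hx
  exact h.mk_neighborSet_le.trans (add_le_of_le hκ hx hx)

theorem happy_of_infinite_opponents (hx : #(G.neighborSet x) ≤ ℵ₀)
    (h : (opponents G p x).Infinite) : Happy G p x :=
  (mk_le_mk_of_subset friends_subset_neighborSet).trans
    (hx.trans (aleph0_le_mk_iff.2 h.to_subtype))

theorem Happy.mono (h : Happy G p x) (hf : friends G q x ⊆ friends G p x)
    (ho : opponents G p x ⊆ opponents G q x) : Happy G q x :=
  (mk_le_mk_of_subset hf).trans (h.trans (mk_le_mk_of_subset ho))

theorem Happy.congr (h : Happy G p x) (hx : q x = p x) (hN : Set.EqOn q p (G.neighborSet x)) :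
    Happy G q x :=
  h.mono (fun y hy => ⟨hy.1, by rw [← hN hy.1, hy.2, hx]⟩)
    (fun y hy => ⟨hy.1, by rw [hN hy.1, hx]; exact hy.2⟩)

theorem Happy.of_eqOn_compl {κ : Cardinal} (hκ : ℵ₀ ≤ κ) (h : Happy G p x)
    (hx : κ < #(G.neighborSet x)) {W : Set V} (hWκ : #W ≤ κ) (hqx : q x = p x)
    (hW : Set.EqOn q p Wᶜ) : Happy G q x := by
  have opp_le : #(opponents G p x) ≤ #(opponents G q x) + κ :=
    (mk_le_mk_of_subset (opponents_subset_of_eqOn_compl hqx.symm hW.symm)).trans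
      ((mk_union_le _ _).trans (add_le_add_right hWκ _))
  have friends_le : #(friends G q x) ≤ #(friends G p x) + κ :=
    (mk_le_mk_of_subset (friends_subset_of_eqOn_compl hqx hW)).trans
      ((mk_union_le _ _).trans (add_le_add_right hWκ _))
  have le_opp : κ ≤ #(opponents G q x) := by
    by_contra! hlt
    exact (h.lt_mk_opponents hκ hx).not_ge (opp_le.trans (add_le_of_le hκ hlt.le le_rfl))
  have absorb : #(opponents G q x) + κ = #(opponents G q x) :=
    add_eq_left (hκ.trans le_opp) le_opp
  calc #(friends G q x) ≤ #(opponents G p x) + κ := friends_le.trans (add_le_add_left h κ)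
    _ ≤ #(opponents G q x) + κ + κ := add_le_add_left opp_le κ
    _ = #(opponents G q x) := by rw [absorb, absorb]

theorem happy_update_self [DecidableEq V] (h : ¬ Happy G p s) :
    Happy G (Function.update p s (!p s)) s := by
  have flip {y : V} (hy : G.Adj s y) : Function.update p s (!p s) y = p y :=
    Function.update_of_ne hy.ne' _ _
  refine (mk_le_mk_of_subset (t := opponents G p s) ?_).trans
    ((not_le.1 h).le.trans (mk_le_mk_of_subset (s := friends G p s) ?_))
  · rintro y ⟨hsy, hy⟩
    rw [flip hsy, Function.update_self, Bool.eq_not] at hy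
    exact ⟨hsy, hy⟩
  · rintro y ⟨hsy, hy⟩
    refine ⟨hsy, ?_⟩
    rw [flip hsy, Function.update_self, hy]
    simp

theorem Happy.update_of_notMem_opponents [DecidableEq V] (h : Happy G p x) (hxs : x ≠ s)
    (hs : s ∉ opponents G p x) : Happy G (Function.update p s (!p s)) x := by
  have hps (hadj : G.Adj x s) : p s = p x := not_not.1 fun hne => hs ⟨hadj, hne⟩
  have hx : Function.update p s (!p s) x = p x := Function.update_of_ne hxs _ _
  refine h.mono ?_ ?_ <;> rintro y ⟨hxy, hy⟩ <;> refine ⟨hxy, ?_⟩ <;>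
    obtain rfl | hys := eq_or_ne y s
  · exact hps hxy
  · rwa [hx, Function.update_of_ne hys] at hy
  · exact absurd (hps hxy) hy
  · rwa [hx, Function.update_of_ne hys]

theorem happy_induce_iff {A : Set V} (hx : x ∈ A) (hA : G.neighborSet x ⊆ A) :
    Happy (G.induce A) (fun a => p a) ⟨x, hx⟩ ↔ Happy G p x := by
  have key (r : Bool → Prop) : #{y : A | (G.induce A).Adj ⟨x, hx⟩ y ∧ r (p y)} =
      #{y : V | G.Adj x y ∧ r (p y)} := by
    rw [← mk_image_eq Subtype.val_injective]
    congr 2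
    ext y
    simpa using fun hxy _ => hA hxy
  exact iff_of_eq (congrArg₂ (· ≤ ·) (key (· = p x)) (key (· ≠ p x)))

theorem prePartitionable_iff_extendable : PrePartitionable G ↔ ∀ U, Extendable G U := by
  classical
  constructor
  · intro h U π
    obtain ⟨p, hpU, hp⟩ := h U fun u => π u
    exact ⟨p, fun u hu => hpU ⟨u, hu⟩, hp⟩
  · intro h U π
    obtain ⟨p, hpU, hp⟩ := h U fun x => if hx : x ∈ U then π ⟨x, hx⟩ else true
    exact ⟨p, fun u => (hpU u.2).trans (dif_pos u.2), hp⟩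

end Happy

section Finite

open scoped Matrix

/-- The sign of a colour. -/
def spin (b : Bool) : ℤ := if b then 1 else -1

/-- Twice the number of monochromatic edges minus twice the number of bichromatic ones, written
as the quadratic form of the adjacency matrix. -/
def energy {V : Type*} [Fintype V] (G : SimpleGraph V) [DecidableRel G.Adj] (p : V → Bool) : ℤ :=
  (spin ∘ p) ⬝ᵥ G.adjMatrix ℤ *ᵥ (spin ∘ p)

variable {V : Type*} [Fintype V] (G : SimpleGraph V) [DecidableRel G.Adj]

theorem spin_mul_spin (a b : Bool) : spin a * spin b = if b = a then 1 else -1 := by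
  cases a <;> cases b <;> rfl

theorem spin_mul_adjMatrix_mulVec (p : V → Bool) (x : V) :
    spin (p x) * (G.adjMatrix ℤ *ᵥ (spin ∘ p)) x =
      (friends G p x).ncard - (opponents G p x).ncard := by
  classical
  have hf : friends G p x = ({y ∈ G.neighborFinset x | p y = p x} : Finset V) := by
    ext y; simp [friends]
  have ho : opponents G p x = ({y ∈ G.neighborFinset x | ¬ p y = p x} : Finset V) := by
    ext y; simp [opponents]
  simp only [SimpleGraph.adjMatrix_mulVec_apply, Finset.mul_sum, Function.comp_apply,
    spin_mul_spin, Finset.sum_ite, Finset.sum_const, nsmul_eq_mul, mul_one, mul_neg,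
    hf, ho, Set.ncard_coe_finset, sub_eq_add_neg]

theorem energy_update_not [DecidableEq V] (p : V → Bool) (x : V) :
    energy G (Function.update p x (!p x)) =
      energy G p - 4 * (spin (p x) * (G.adjMatrix ℤ *ᵥ (spin ∘ p)) x) := by
  set v : V → ℤ := Pi.single x (-2 * spin (p x))
  have hspin : spin ∘ Function.update p x (!p x) = spin ∘ p + v := by
    ext y
    obtain rfl | hy := eq_or_ne y x
    · cases h : p y <;> simp [v, spin, h]
    · simp [v, hy]
  have hcross : (spin ∘ p) ⬝ᵥ G.adjMatrix ℤ *ᵥ v = v ⬝ᵥ G.adjMatrix ℤ *ᵥ (spin ∘ p) := by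
    rw [Matrix.dotProduct_mulVec, ← Matrix.mulVec_transpose, SimpleGraph.transpose_adjMatrix,
      dotProduct_comm]
  have hdiag : v ⬝ᵥ G.adjMatrix ℤ *ᵥ v = 0 := by simp [v]
  have hlin : v ⬝ᵥ G.adjMatrix ℤ *ᵥ (spin ∘ p) =
      -2 * spin (p x) * (G.adjMatrix ℤ *ᵥ (spin ∘ p)) x := single_dotProduct _ _ _
  rw [energy, energy, hspin, Matrix.mulVec_add, add_dotProduct, dotProduct_add, dotProduct_add,
    hcross, hdiag, hlin]
  ring

theorem prePartitionable_of_finite {V : Type*} [Finite V] (G : SimpleGraph V) :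
    PrePartitionable G := by
  classical
  have := Fintype.ofFinite V
  refine prePartitionable_iff_extendable.2 fun U π => ?_
  obtain ⟨p, hpU, hmin⟩ := Set.exists_min_image {p | Set.EqOn p π U} (energy G) (Set.toFinite _)
    ⟨π, Set.eqOn_refl π U⟩
  refine ⟨p, hpU, fun x hx => ?_⟩
  have hflip : Set.EqOn (Function.update p x (!p x)) π U := fun u hu => by
    rw [Function.update_of_ne (ne_of_mem_of_not_mem hu hx), hpU hu]
  have hle := hmin _ hflip
  rw [energy_update_not, spin_mul_adjMatrix_mulVec] at hle
  have hncard : (friends G p x).ncard ≤ (opponents G p x).ncard := by lia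
  change #(friends G p x) ≤ #(opponents G p x)
  rw [← Set.cast_ncard (Set.toFinite _), ← Set.cast_ncard (Set.toFinite _)]
  exact_mod_cast hncard

end Finite

section Uncountable

theorem exists_superset_closed_mk_le {V : Type*} {κ : Cardinal} (hκ : ℵ₀ ≤ κ) (r : V → Set V)
    (hr : ∀ x, #(r x) ≤ κ) (Y : Set V) (hY : #Y ≤ κ) :
    ∃ W, Y ⊆ W ∧ (∀ x ∈ W, r x ⊆ W) ∧ #W ≤ κ := by
  let Z (n : ℕ) : Set V := (fun A => ⋃ x ∈ A, r x)^[n] Y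
  have Z_succ (n : ℕ) : Z (n + 1) = ⋃ x ∈ Z n, r x := Function.iterate_succ_apply' _ _ _
  have hZ (n : ℕ) : #(Z n) ≤ κ := by
    induction n with
    | zero => exact hY
    | succ n ih =>
      rw [Z_succ]
      exact (mk_biUnion_le _ _).trans (mul_le_of_le hκ ih (ciSup_le' fun x => hr x))
  refine ⟨⋃ n, Z n, Set.subset_iUnion Z 0, fun x hx => ?_, ?_⟩
  · obtain ⟨n, hn⟩ := Set.mem_iUnion.1 hx
    refine Set.Subset.trans ?_ (Set.subset_iUnion Z (n + 1))
    rw [Z_succ]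
    exact Set.subset_biUnion_of_mem (u := r) hn
  · have hle := mk_iUnion_le_lift Z
    simp only [lift_uzero, mk_nat, lift_aleph0] at hle
    exact hle.trans (mul_le_of_le hκ hκ (ciSup_le' hZ))

variable {V : Type*} {G : SimpleGraph V}

theorem exists_neighbor_closed_mk_le (G : SimpleGraph V) {κ : Cardinal} (hκ : ℵ₀ ≤ κ) (Y : Set V)
    (hY : #Y ≤ κ) :
    ∃ W : Set V, #W ≤ κ ∧ (∀ x ∈ W, #(G.neighborSet x) ≤ κ) ∧
      (∀ y ∈ Y, #(G.neighborSet y) ≤ κ → y ∈ W) ∧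
      ∀ x ∈ W, ∀ y, G.Adj x y → #(G.neighborSet y) ≤ κ → y ∈ W := by
  let D : Set V := {x | #(G.neighborSet x) ≤ κ}
  have hr (x : V) : #{y | x ∈ D ∧ G.Adj x y} ≤ κ := by
    by_cases hx : x ∈ D
    · exact (mk_le_mk_of_subset fun y hy => hy.2).trans hx
    · simp [hx]
  obtain ⟨W, hYW, hW, hWκ⟩ :=
    exists_superset_closed_mk_le hκ (fun x => {y | x ∈ D ∧ G.Adj x y}) hr Y hY
  exact ⟨W ∩ D, (mk_le_mk_of_subset Set.inter_subset_left).trans hWκ, fun x hx => hx.2,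
    fun y hy hyD => ⟨hYW hy, hyD⟩, fun x hx y hxy hyD => ⟨hW x hx.1 ⟨hx.2, hxy⟩, hyD⟩⟩

theorem Happy.of_eqOn_update_compl [DecidableEq V] {κ : Cardinal} (hκ : ℵ₀ ≤ κ) {p q : V → Bool}
    {s x : V} {W : Set V} (hWκ : #W ≤ κ)
    (hoppW : ∀ y ∈ opponents G p s, #(G.neighborSet y) ≤ κ → y ∈ W)
    (hWclosed : ∀ x ∈ W, ∀ y, G.Adj x y → #(G.neighborSet y) ≤ κ → y ∈ W)
    (hq : Set.EqOn q (Function.update p s (!p s)) Wᶜ) (hx : Happy G p x) (hxs : x ≠ s)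
    (hxW : x ∉ W) : Happy G q x := by
  obtain hxκ | hxκ := le_or_gt #(G.neighborSet x) κ
  · have hflip : Happy G (Function.update p s (!p s)) x :=
      hx.update_of_notMem_opponents hxs fun hs => hxW (hoppW x ⟨hs.1.symm, hs.2.symm⟩ hxκ)
    exact hflip.congr (hq hxW) fun y hxy =>
      hq fun hyW => hxW (hWclosed y hyW x hxy.symm hxκ)
  · have hqp : Set.EqOn q p (insert s W)ᶜ := fun y hy => by
      rw [Set.mem_compl_iff, Set.mem_insert_iff, not_or] at hy
      rw [hq hy.2, Function.update_of_ne hy.1]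
    have hcard : #(insert s W : Set V) ≤ κ :=
      mk_insert_le.trans (add_le_of_le hκ hWκ (one_le_aleph0.trans hκ))
    exact hx.of_eqOn_compl hκ hxκ hcard (hqp (by simp [hxs, hxW])) hqp

/- Take a colouring with only `s` unhappy and flip `s`. This can only hurt its former opponents, so
with `κ` their number it suffices to recolour the vertices of degree at most `κ` that are reachable
from them through such vertices. There are at most `κ` of these, too few to be noticed by a vertex
of larger degree, in particular by `s`. -/
theorem extendable_of_uncountable_neighborSet {U : Set V} {s : V} (hsU : s ∉ U)
    (hs : ℵ₀ < #(G.neighborSet s)) (ih : ∀ U', U ⊆ U' → s ∈ U' → Extendable G U') :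
    Extendable G U := by
  classical
  intro π
  obtain ⟨p, hpU, hp⟩ := ih (insert s U) (Set.subset_insert _ _) (Set.mem_insert _ _) π
  replace hpU : Set.EqOn p π U := hpU.mono (Set.subset_insert _ _)
  replace hp : ∀ x ∉ U, x ≠ s → Happy G p x := fun x hx hxs => hp x (by simp [hx, hxs])
  by_cases hps : Happy G p s
  · refine ⟨p, hpU, fun x hx => ?_⟩
    obtain rfl | hxs := eq_or_ne x s
    exacts [hps, hp x hx hxs]
  set κ := max ℵ₀ #(opponents G p s)
  have hκ : ℵ₀ ≤ κ := le_max_left _ _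
  have hsκ : κ < #(G.neighborSet s) :=
    max_lt hs ((not_le.1 hps).trans_le (mk_le_mk_of_subset friends_subset_neighborSet))
  obtain ⟨W, hWκ, hWdeg, hoppW, hWclosed⟩ :=
    exists_neighbor_closed_mk_le G hκ (opponents G p s) (le_max_right _ _)
  have hsW : s ∉ W := fun h => (hWdeg s h).not_gt hsκ
  obtain ⟨q, hqU, hq⟩ := ih (U ∪ Wᶜ) Set.subset_union_left (Or.inr hsW)
    (Function.update p s (!p s))
  have hqW := hqU.mono Set.subset_union_right
  refine ⟨q, fun u hu => ?_, fun x hx => ?_⟩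
  · rw [hqU (.inl hu), Function.update_of_ne (ne_of_mem_of_not_mem hu hsU), hpU hu]
  by_cases hxW : x ∈ W
  · exact hq x (by simp [hx, hxW])
  obtain rfl | hxs := eq_or_ne x s
  · exact (happy_update_self hps).of_eqOn_compl hκ hsκ hWκ (hqW hxW) hqW
  · exact (hp x hx hxs).of_eqOn_update_compl hκ hWκ hoppW hWclosed hqW hxs hxW

theorem extendable_of_finite_of_countable {S : Set V} (hS : S.Finite)
    (h : ∀ U, (∀ t ∈ S, t ∉ U → #(G.neighborSet t) ≤ ℵ₀) → Extendable G U) (U : Set V) :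
    Extendable G U := by
  induction hn : (S \ U).ncard using Nat.strong_induction_on generalizing U with
  | _ n ih =>
    by_cases hU : ∀ t ∈ S, t ∉ U → #(G.neighborSet t) ≤ ℵ₀
    · exact h U hU
    push Not at hU
    obtain ⟨s, hsS, hsU, hs⟩ := hU
    refine extendable_of_uncountable_neighborSet hsU hs fun U' hUU' hsU' => ih _ ?_ U' rfl
    rw [← hn]
    exact Set.ncard_lt_ncard (Set.ssubset_iff_exists.2
      ⟨Set.sdiff_subset_sdiff_right hUU', s, ⟨hsS, hsU⟩, fun h => h.2 hsU'⟩) hS.sdiff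

end Uncountable

section Combinatorics

theorem exists_injective_forall_mem {T ι : Type*} [Countable T] (J : T → Set ι)
    (hJ : ∀ t, (J t).Infinite) : ∃ f : T → ι, Function.Injective f ∧ ∀ t, f t ∈ J t := by
  classical
  have := Encodable.ofCountable T
  choose M hMJ hMcard using fun t => (hJ t).exists_subset_card_eq (Encodable.encode t + 1)
  obtain ⟨f, hf, hfM⟩ := (Finset.all_card_le_biUnion_card_iff_exists_injective M).1 fun s => by
    obtain rfl | hs := s.eq_empty_or_nonempty
    · simp
    obtain ⟨m, hm, hmax⟩ := s.exists_max_image Encodable.encode hs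
    calc s.card = (s.image Encodable.encode).card :=
          (Finset.card_image_of_injective _ Encodable.encode_injective).symm
      _ ≤ (Finset.range (Encodable.encode m + 1)).card := Finset.card_le_card <|
          Finset.image_subset_iff.2 fun x hx => Finset.mem_range.2 (Nat.lt_succ_of_le (hmax x hx))
      _ = (M m).card := by rw [hMcard, Finset.card_range]
      _ ≤ (s.biUnion M).card := Finset.card_le_card (Finset.subset_biUnion_of_mem M hm)
  exact ⟨f, hf, fun t => hMJ t (hfM t)⟩

theorem exists_pairwise_disjoint_infinite_subset {T ι : Type*} [Countable T] (J : T → Set ι)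
    (hJ : ∀ t, (J t).Infinite) :
    ∃ K : T → Set ι, (∀ t, K t ⊆ J t) ∧ (∀ t, (K t).Infinite) ∧
      Pairwise (Function.onFun Disjoint K) := by
  obtain ⟨f, hf, hfJ⟩ := exists_injective_forall_mem (fun a : T × ℕ => J a.1) fun a => hJ a.1
  refine ⟨fun t => Set.range fun n => f (t, n), ?_, ?_, ?_⟩
  · rintro t _ ⟨n, rfl⟩
    exact hfJ (t, n)
  · exact fun t => Set.infinite_range_of_injective (hf.comp (Prod.mk_right_injective t))
  · refine fun t t' htt' => Set.disjoint_left.2 ?_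
    rintro _ ⟨n, rfl⟩ ⟨n', h⟩
    exact htt' (congrArg Prod.fst (hf h)).symm

theorem exists_eventually_eqOn {α V : Type*} (D : Ultrafilter α) (q : α → V → Bool) {S : Set V}
    (hS : S.Finite) : ∃ σ : V → Bool, ∀ᶠ F in D, Set.EqOn (q F) σ S := by
  classical
  refine ⟨fun x => decide (∀ᶠ F in D, q F x = true), (Filter.eventually_all_finite hS).2 ?_⟩
  intro x _
  by_cases hx : ∀ᶠ F in D, q F x = true
  · simp [hx]
  · simpa [hx] using Ultrafilter.eventually_not.2 hx

end Combinatorics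

/-- A labelling `c` that presents the pieces of `G - S` for a finite vertex set `S`: the vertices of
`S` are labelled `none`, and the other vertices by the piece containing them. Pieces are unions of
components of `G - S`, possibly empty. -/
structure FiniteSeparation {V ι : Type*} (G : SimpleGraph V) (c : V → Option ι) : Prop where
  finite_separator : {x | c x = none}.Finite
  eq_of_adj : ∀ ⦃x y⦄, G.Adj x y → ∀ ⦃i j⦄, c x = some i → c y = some j → i = j

/-- The separator together with the pieces whose label lies in `F`. -/
def region {V ι : Type*} (c : V → Option ι) (F : Finset ι) : Set V :=
  {x | ∀ i, c x = some i → i ∈ F}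

/-- A colouring with values `σ` on the separator that extends the precolouring `π` of `U` and makes
the other vertices of the piece `i` happy. -/
structure PieceSolution {V ι : Type*} (G : SimpleGraph V) (c : V → Option ι) (U : Set V)
    (π σ : V → Bool) (i : ι) (e : V → Bool) : Prop where
  eqOn_precolored : Set.EqOn e π U
  eqOn_separator : ∀ x, c x = none → e x = σ x
  happy : ∀ x ∉ U, c x = some i → Happy G e x

/-- A colouring with values `σ` on the separator that extends the precolouring `π` of `U` and makes
the other vertices of `region c F` happy in the graph induced on this region. -/
structure RegionSolution {V ι : Type*} (G : SimpleGraph V) (c : V → Option ι) (U : Set V)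
    (π σ : V → Bool) (F : Finset ι) (q : V → Bool) : Prop where
  eqOn_precolored : Set.EqOn q π U
  eqOn_separator : ∀ x, c x = none → q x = σ x
  happy : ∀ x ∉ U, ∀ hx : x ∈ region c F, Happy (G.induce (region c F)) (fun a => q a) ⟨x, hx⟩

/-- The colouring given by `σ` on the separator and by `e i` on the piece `i`. -/
def glue {V ι : Type*} (c : V → Option ι) (σ : V → Bool) (e : ι → V → Bool) (x : V) : Bool :=
  (c x).elim (σ x) fun i => e i x

/-- The region of `F` decides whether the neighbourhood of `t` is finite: it contains all
neighbours of `t`, or infinitely many. -/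
def Settled {V ι : Type*} (G : SimpleGraph V) (c : V → Option ι) (F : Finset ι) (t : V) : Prop :=
  G.neighborSet t ⊆ region c F ∨ (G.neighborSet t ∩ region c F).Infinite

/-- The pieces that have a solution providing the separator vertex `t` with an opponent. -/
def opposablePieces {V ι : Type*} (G : SimpleGraph V) (c : V → Option ι) (U : Set V)
    (π σ : V → Bool) (t : V) : Set ι :=
  {i | ∃ e, PieceSolution G c U π σ i e ∧ ∃ y ∈ opponents G e t, c y = some i}

section Separation

variable {V ι : Type*} {G : SimpleGraph V} {c : V → Option ι} {U : Set V} {π σ : V → Bool}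
  {F F₀ : Finset ι} {i : ι} {q : V → Bool} {e : ι → V → Bool} {t x : V}

theorem mem_region_of_eq_none (hx : c x = none) : x ∈ region c F := fun i hi => by
  rw [hx] at hi; cases hi

theorem mem_region_of_eq_some (hx : c x = some i) (hi : i ∈ F) : x ∈ region c F := fun j hj => by
  rwa [← Option.some.inj (hx.symm.trans hj)]

theorem region_mono (h : F₀ ⊆ F) : region c F₀ ⊆ region c F := fun _ hx i hi => h (hx i hi)

theorem FiniteSeparation.neighborSet_subset_region (hc : FiniteSeparation G c)
    (hx : c x = some i) (hi : i ∈ F) : G.neighborSet x ⊆ region c F := fun y hxy j hj => by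
  rwa [← hc.eq_of_adj hxy hx hj]

theorem Settled.mono (h : F₀ ⊆ F) (ht : Settled G c F₀ t) : Settled G c F t :=
  ht.imp (fun hN => hN.trans (region_mono h))
    (fun hinf => hinf.mono (Set.inter_subset_inter_right _ (region_mono h)))

theorem neighborSet_infinite_of_not_settled (ht : ∀ F : Finset ι, ¬ Settled G c F t) :
    (G.neighborSet t).Infinite := fun hfin => by
  classical
  let F : Finset ι := (hfin.toFinset.image c).eraseNone
  refine ht F (.inl fun y hy i hi => Finset.mem_eraseNone.2 (hi ▸ ?_))
  exact Finset.mem_image_of_mem c (hfin.mem_toFinset.2 hy)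

theorem RegionSolution.pieceSolution (hc : FiniteSeparation G c)
    (hq : RegionSolution G c U π σ F q) (hi : i ∈ F) : PieceSolution G c U π σ i q where
  eqOn_precolored := hq.eqOn_precolored
  eqOn_separator := hq.eqOn_separator
  happy _ hxU hx := (happy_induce_iff (mem_region_of_eq_some hx hi)
    (hc.neighborSet_subset_region hx hi)).1 (hq.happy _ hxU _)

theorem PrePartitionable.exists_extension_induce {A : Set V} (h : PrePartitionable (G.induce A))
    (U : Set V) (π : V → Bool) : ∃ q : V → Bool, Set.EqOn q π U ∧
      ∀ x ∉ U, ∀ hx : x ∈ A, Happy (G.induce A) (fun a => q a) ⟨x, hx⟩ := by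
  classical
  obtain ⟨p, hpU, hp⟩ := prePartitionable_iff_extendable.1 h (Subtype.val ⁻¹' U) fun a => π a
  refine ⟨fun x => if hx : x ∈ A then p ⟨x, hx⟩ else π x, fun u hu => ?_, fun x hxU hx => ?_⟩
  · by_cases huA : u ∈ A
    · exact (dif_pos huA).trans (hpU (x := ⟨u, huA⟩) hu)
    · exact dif_neg huA
  · simpa using hp ⟨x, hx⟩ hxU

theorem FiniteSeparation.exists_cofinal_regionSolution (hc : FiniteSeparation G c)
    (h : ∀ F : Finset ι, PrePartitionable (G.induce (region c F))) (U : Set V) (π : V → Bool) :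
    ∃ σ : V → Bool, ∀ F₀ : Finset ι, ∃ F, F₀ ⊆ F ∧ ∃ q, RegionSolution G c U π σ F q := by
  choose q hqU hq using fun F => (h F).exists_extension_induce U π
  let D : Ultrafilter (Finset ι) := Ultrafilter.of Filter.atTop
  obtain ⟨σ, hσ⟩ := exists_eventually_eqOn D q hc.finite_separator
  refine ⟨σ, fun F₀ => ?_⟩
  have hF₀ : ∀ᶠ F in D, F₀ ⊆ F := Ultrafilter.of_le _ (Filter.eventually_ge_atTop F₀)
  obtain ⟨F, hF, hqσ⟩ := (hF₀.and hσ).exists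
  exact ⟨F, hF, q F, hqU F, hqσ, hq F⟩

/- If only finitely many pieces were opposable, then every region solution would leave `t` with a
bounded number of opponents, although `t` has arbitrarily many neighbours in large regions. -/
theorem FiniteSeparation.infinite_opposablePieces (hc : FiniteSeparation G c)
    (hσ : ∀ F₀ : Finset ι, ∃ F, F₀ ⊆ F ∧ ∃ q, RegionSolution G c U π σ F q) (ht : c t = none)
    (htU : t ∉ U) (hunsettled : ∀ F : Finset ι, ¬ Settled G c F t) :
    (opposablePieces G c U π σ t).Infinite := by
  classical
  intro hfin
  have hK : (G.neighborSet t ∩ region c hfin.toFinset).Finite :=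
    Set.not_infinite.1 fun h => hunsettled _ (.inr h)
  set k := (G.neighborSet t ∩ region c hfin.toFinset).ncard
  obtain ⟨M, hMt, hMcard⟩ :=
    (neighborSet_infinite_of_not_settled hunsettled).exists_subset_card_eq (2 * k + 1)
  obtain ⟨F, hF, q, hq⟩ := hσ (M.image c).eraseNone
  have htF : t ∈ region c F := mem_region_of_eq_none ht
  have hopp : Subtype.val '' opponents (G.induce (region c F)) (fun a => q a) ⟨t, htF⟩ ⊆
      G.neighborSet t ∩ region c hfin.toFinset := by
    rintro _ ⟨y, ⟨hty, hy⟩, rfl⟩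
    refine ⟨hty, fun i hi => hfin.mem_toFinset.2 ?_⟩
    exact ⟨q, hq.pieceSolution hc (y.2 i hi), y, ⟨hty, hy⟩, hi⟩
  have hM : (M : Set V) ⊆
      Subtype.val '' (G.induce (region c F)).neighborSet ⟨t, htF⟩ := fun y hy =>
    ⟨⟨y, fun i hi => hF (Finset.mem_eraseNone.2 (hi ▸ Finset.mem_image_of_mem c hy))⟩,
      hMt hy, rfl⟩
  have hle : #(M : Set V) ≤ k + k :=
    calc #(M : Set V) ≤ #((G.induce (region c F)).neighborSet ⟨t, htF⟩) :=
          (mk_le_mk_of_subset hM).trans_eq (mk_image_eq Subtype.val_injective)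
      _ ≤ _ := (hq.happy t htU htF).mk_neighborSet_le
      _ ≤ k + k := by
        rw [← mk_image_eq Subtype.val_injective, Set.cast_ncard hK]
        exact add_le_add (mk_le_mk_of_subset hopp) (mk_le_mk_of_subset hopp)
  rw [Finset.coe_sort_coe, mk_coe_finset, hMcard] at hle
  norm_cast at hle
  omega

theorem glue_of_eq_none (hx : c x = none) : glue c σ e x = σ x := by
  simp [glue, hx]

theorem glue_of_eq_some (hx : c x = some i) : glue c σ e x = e i x := by
  simp [glue, hx]

theorem PieceSolution.glue_eq (he : PieceSolution G c U π σ i (e i))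
    (hx : ∀ j, c x = some j → j = i) : glue c σ e x = e i x := by
  cases h : c x with
  | none => rw [glue_of_eq_none h, he.eqOn_separator x h]
  | some j => rw [glue_of_eq_some h, hx j h]

theorem RegionSolution.glue_eqOn_precolored (hq : RegionSolution G c U π σ F q)
    (he : ∀ i, PieceSolution G c U π σ i (e i)) : Set.EqOn (glue c σ e) π U := fun u hu => by
  cases h : c u with
  | none => rw [glue_of_eq_none h, ← hq.eqOn_separator u h, hq.eqOn_precolored hu]
  | some j => rw [glue_of_eq_some h, (he j).eqOn_precolored hu]

theorem RegionSolution.glue_eqOn_region (hq : RegionSolution G c U π σ F q)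
    (he : ∀ i ∈ F, e i = q) : Set.EqOn (glue c σ e) q (region c F) := fun x hx => by
  cases h : c x with
  | none => rw [glue_of_eq_none h, hq.eqOn_separator x h]
  | some i => rw [glue_of_eq_some h, he i (hx i h)]

theorem FiniteSeparation.happy_glue (hc : FiniteSeparation G c)
    (he : PieceSolution G c U π σ i (e i)) (hxU : x ∉ U) (hx : c x = some i) :
    Happy G (glue c σ e) x :=
  (he.happy x hxU hx).congr (glue_of_eq_some hx) fun _ hxy =>
    he.glue_eq fun _ hj => (hc.eq_of_adj hxy hx hj).symm

theorem RegionSolution.happy_of_settled (hq : RegionSolution G c U π σ F q) {p : V → Bool}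
    (hp : Set.EqOn p q (region c F)) (ht : c t = none) (htU : t ∉ U)
    (hdeg : #(G.neighborSet t) ≤ ℵ₀) (hset : Settled G c F t) : Happy G p t := by
  have htF : t ∈ region c F := mem_region_of_eq_none ht
  obtain hN | hN := hset
  · exact ((happy_induce_iff htF hN).1 (hq.happy t htU htF)).congr (hp htF) (hp.mono hN)
  · have hNF : ((G.induce (region c F)).neighborSet ⟨t, htF⟩).Infinite := by
      refine Set.Infinite.of_image Subtype.val (hN.mono ?_)
      exact fun y ⟨hty, hy⟩ => ⟨⟨y, hy⟩, hty, rfl⟩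
    refine happy_of_infinite_opponents hdeg <|
      (((hq.happy t htU htF).infinite_opponents hNF).image Subtype.val_injective.injOn).mono ?_
    rintro _ ⟨y, ⟨hty, hy⟩, rfl⟩
    exact ⟨hty, by rwa [hp y.2, hp htF]⟩

theorem PieceSolution.infinite_opponents_glue (he : ∀ i, PieceSolution G c U π σ i (e i))
    (ht : c t = none) (h : {i | ∃ y ∈ opponents G (e i) t, c y = some i}.Infinite) :
    (opponents G (glue c σ e) t).Infinite := by
  refine Set.Infinite.of_image c ((h.image (Option.some_injective ι).injOn).mono ?_)
  rintro _ ⟨i, ⟨y, ⟨hty, hy⟩, hyi⟩, rfl⟩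
  refine ⟨y, ⟨hty, ?_⟩, hyi⟩
  rwa [glue_of_eq_some hyi, glue_of_eq_none ht, ← (he i).eqOn_separator t ht]

theorem RegionSolution.exists_pieceSolutions (hc : FiniteSeparation G c)
    (hq : RegionSolution G c U π σ F q) (hsol : ∀ i, ∃ e, PieceSolution G c U π σ i e)
    {T : Set V} (hT : T.Countable) (hopp : ∀ t ∈ T, (opposablePieces G c U π σ t).Infinite) :
    ∃ e : ι → V → Bool, (∀ i, PieceSolution G c U π σ i (e i)) ∧ (∀ i ∈ F, e i = q) ∧
      ∀ t ∈ T, {i | ∃ y ∈ opponents G (e i) t, c y = some i}.Infinite := by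
  have := hT.to_subtype
  obtain ⟨K, hKopp, hKinf, hKdisj⟩ := exists_pairwise_disjoint_infinite_subset
    (fun t : T => opposablePieces G c U π σ t \ F) fun t => (hopp t t.2).sdiff F.finite_toSet
  have hpiece (i : ι) : ∃ e, PieceSolution G c U π σ i e ∧ (i ∈ F → e = q) ∧
      ∀ t : T, i ∈ K t → ∃ y ∈ opponents G e t, c y = some i := by
    by_cases hiF : i ∈ F
    · exact ⟨q, hq.pieceSolution hc hiF, fun _ => rfl, fun t ht => absurd hiF (hKopp t ht).2⟩
    by_cases hiK : ∃ t, i ∈ K t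
    · obtain ⟨t, hit⟩ := hiK
      obtain ⟨e, he, hy⟩ := (hKopp t hit).1
      refine ⟨e, he, fun h => absurd h hiF, fun t' hit' => ?_⟩
      obtain rfl : t = t' := by_contra fun htt' => Set.disjoint_left.1 (hKdisj htt') hit hit'
      exact hy
    · obtain ⟨e, he⟩ := hsol i
      exact ⟨e, he, fun h => absurd h hiF, fun t hit => absurd ⟨t, hit⟩ hiK⟩
  choose e he heF heK using hpiece
  exact ⟨e, he, heF, fun t ht => (hKinf ⟨t, ht⟩).mono fun i hi => heK i ⟨t, ht⟩ hi⟩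

theorem FiniteSeparation.exists_settling (hc : FiniteSeparation G c) :
    ∃ F₀ : Finset ι, ∀ t, c t = none → ∀ F, Settled G c F t → Settled G c F₀ t := by
  classical
  choose! F hF using fun t (h : ∃ F, Settled G c F t) => h
  refine ⟨hc.finite_separator.toFinset.biUnion F, fun t ht F' hF' => (hF t ⟨F', hF'⟩).mono ?_⟩
  exact Finset.subset_biUnion_of_mem F (hc.finite_separator.mem_toFinset.2 ht)

theorem FiniteSeparation.extendable_of_countable (hc : FiniteSeparation G c)
    (h : ∀ F : Finset ι, PrePartitionable (G.induce (region c F)))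
    (hdeg : ∀ t, c t = none → t ∉ U → #(G.neighborSet t) ≤ ℵ₀) : Extendable G U := by
  intro π
  obtain ⟨σ, hσ⟩ := hc.exists_cofinal_regionSolution h U π
  have hsol (i : ι) : ∃ e, PieceSolution G c U π σ i e := by
    obtain ⟨F, hF, q, hq⟩ := hσ {i}
    exact ⟨q, hq.pieceSolution hc (Finset.singleton_subset_iff.1 hF)⟩
  obtain ⟨F₀, hF₀⟩ := hc.exists_settling
  obtain ⟨F, hF, q, hq⟩ := hσ F₀
  let T : Set V := {t | c t = none ∧ t ∉ U ∧ ∀ F : Finset ι, ¬ Settled G c F t}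
  have hT : T.Finite := hc.finite_separator.subset fun t ht => ht.1
  obtain ⟨e, he, heF, heT⟩ := hq.exists_pieceSolutions hc hsol hT.countable
    fun t ht => hc.infinite_opposablePieces hσ ht.1 ht.2.1 ht.2.2
  refine ⟨glue c σ e, hq.glue_eqOn_precolored he, fun x hxU => ?_⟩
  cases hx : c x with
  | some i => exact hc.happy_glue (he i) hxU hx
  | none =>
    by_cases hset : ∃ F, Settled G c F x
    · obtain ⟨F', hF'⟩ := hset
      exact hq.happy_of_settled (hq.glue_eqOn_region heF) hx hxU (hdeg x hx hxU)
        ((hF₀ x hx F' hF').mono hF)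
    · exact happy_of_infinite_opponents (hdeg x hx hxU) <|
        PieceSolution.infinite_opponents_glue he hx (heT x ⟨hx, hxU, not_exists.1 hset⟩)

theorem FiniteSeparation.prePartitionable (hc : FiniteSeparation G c)
    (h : ∀ F : Finset ι, PrePartitionable (G.induce (region c F))) : PrePartitionable G :=
  prePartitionable_iff_extendable.2 <|
    extendable_of_finite_of_countable hc.finite_separator fun _ => hc.extendable_of_countable h

end Separation

section GraphClass

/-- Inclusion of graph classes. -/
instance : PartialOrder GraphClass.{u} :=
  inferInstanceAs (PartialOrder (∀ V : Type u, SimpleGraph V → Prop))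

/-- The graphs that fall apart into members of `𝒰` when finitely many vertices are deleted. -/
def separationClosure (𝒰 : GraphClass.{u}) : GraphClass.{u} := fun V G =>
  ∃ (ι : Type u) (c : V → Option ι), FiniteSeparation G c ∧
    ∀ i, 𝒰 (c ⁻¹' {some i} : Set V) (G.induce (c ⁻¹' {some i}))

variable {𝒰 𝒱 : GraphClass.{u}} {V W ι κ : Type u} {G : SimpleGraph V} {H : SimpleGraph W}
  {c : V → Option ι} {d : W → Option κ}

theorem FinitelyClosed.of_embedding (h : FinitelyClosed 𝒰) (f : G ↪g H)
    (hf : (Set.range f)ᶜ.Finite) (hG : 𝒰 V G) : 𝒰 W H := by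
  refine h.addFinite_mem H _ hf ?_
  rw [compl_compl]
  exact h.iso_closed _ _ ⟨f.isoInduceRange⟩ hG

theorem FinitelyClosed.induce_mono (h : FinitelyClosed 𝒰) {A B : Set V} (hAB : A ⊆ B)
    (hfin : (B \ A).Finite) (hA : 𝒰 A (G.induce A)) : 𝒰 B (G.induce B) := by
  refine h.of_embedding (SimpleGraph.induceHomOfLE G hAB) ?_ hA
  refine (hfin.preimage Subtype.val_injective.injOn).subset fun x hx => ⟨x.2, fun hxA => hx ?_⟩
  exact ⟨⟨x, hxA⟩, rfl⟩

theorem FinitelyClosed.induce_image (h : FinitelyClosed 𝒰) (f : G ↪g H) {A : Set V}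
    (hA : 𝒰 A (G.induce A)) : 𝒰 (f '' A : Set W) (H.induce (f '' A)) := by
  have hrange : Set.range (f.comp (SimpleGraph.Embedding.induce A)) = f '' A := by
    ext; simp
  rw [← hrange]
  exact h.iso_closed _ _ ⟨SimpleGraph.Embedding.isoInduceRange _⟩ hA

theorem FinitelyClosed.induce_union (h : FinitelyClosed 𝒰) {A B : Set V} (hAB : Disjoint A B)
    (hadj : ∀ a ∈ A, ∀ b ∈ B, ¬ G.Adj a b) (hA : 𝒰 A (G.induce A)) (hB : 𝒰 B (G.induce B)) :
    𝒰 (A ∪ B : Set V) (G.induce (A ∪ B)) := by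
  classical
  refine h.iso_closed _ _ ⟨(Equiv.Set.union hAB).symm, ?_⟩ (h.sum_mem _ _ hA hB)
  rintro (⟨a, ha⟩ | ⟨a, ha⟩) (⟨b, hb⟩ | ⟨b, hb⟩)
  · simp
  · simpa using hadj a ha b hb
  · simpa using fun hab => hadj b hb a ha hab.symm
  · simp

theorem FinitelyClosed.induce_pieces (h : FinitelyClosed 𝒰) (hc : FiniteSeparation G c)
    (hG : ∀ i, 𝒰 (c ⁻¹' {some i} : Set V) (G.induce (c ⁻¹' {some i})))
    {F : Finset ι} (hF : F.Nonempty) :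
    𝒰 (c ⁻¹' (some '' F) : Set V) (G.induce (c ⁻¹' (some '' F))) := by
  induction hF using Finset.Nonempty.cons_induction with
  | singleton i =>
    rw [Finset.coe_singleton, Set.image_singleton]
    exact hG i
  | cons i F hi _ ih =>
    rw [Finset.coe_cons, Set.image_insert_eq, Set.insert_eq, Set.preimage_union]
    refine h.induce_union ?_ ?_ (hG i) ih
    · refine Disjoint.preimage _ (Set.disjoint_singleton_left.2 ?_)
      rwa [(Option.some_injective ι).mem_set_image]
    · rintro a ha b ⟨j, hj, hb⟩ hab
      exact hi (hc.eq_of_adj hab ha hb.symm ▸ hj)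

theorem FinitelyClosed.prePartitionable_induce_region (h : FinitelyClosed 𝒰)
    (hpp : ∀ (V : Type u) (G : SimpleGraph V), 𝒰 V G → PrePartitionable G)
    (hc : FiniteSeparation G c)
    (hG : ∀ i, 𝒰 (c ⁻¹' {some i} : Set V) (G.induce (c ⁻¹' {some i}))) (F : Finset ι) :
    PrePartitionable (G.induce (region c F)) := by
  have hsep : region c F \ c ⁻¹' (some '' F) ⊆ {x | c x = none} := fun x ⟨hxF, hx⟩ =>
    Option.eq_none_iff_forall_ne_some.2 fun i hi => hx ⟨i, hxF i hi, hi.symm⟩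
  obtain rfl | hF := F.eq_empty_or_nonempty
  · have : Finite (region c (∅ : Finset ι)) :=
      (hc.finite_separator.subset (by simpa using hsep)).to_subtype
    exact prePartitionable_of_finite _
  · refine hpp _ _ (h.induce_mono ?_ (hc.finite_separator.subset hsep)
      (h.induce_pieces hc hG hF))
    rintro x ⟨i, hi, hx⟩
    exact mem_region_of_eq_some hx.symm hi

theorem FinitelyClosed.prePartitionable_of_separationClosure (h : FinitelyClosed 𝒰)
    (hpp : ∀ (V : Type u) (G : SimpleGraph V), 𝒰 V G → PrePartitionable G)
    (hG : separationClosure 𝒰 V G) : PrePartitionable G := by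
  obtain ⟨ι, c, hc, hcG⟩ := hG
  exact hc.prePartitionable (h.prePartitionable_induce_region hpp hc hcG)

theorem FinitelyClosed.le_separationClosure (h : FinitelyClosed 𝒰) :
    𝒰 ≤ separationClosure 𝒰 := by
  intro V G hG
  refine ⟨PUnit, fun _ => some PUnit.unit, ⟨by simp, fun _ _ _ _ _ _ _ => rfl⟩, fun i => ?_⟩
  have huniv : (fun _ : V => some PUnit.unit) ⁻¹' {some i} = Set.univ := by ext; simp
  rw [huniv]
  exact h.iso_closed _ _ ⟨(SimpleGraph.induceUnivIso G).symm⟩ hG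

theorem extend_none_eq_some_iff {α β γ : Type*} {f : α → β} (hf : Function.Injective f)
    {c : α → Option γ} {x : β} {i : γ} :
    Function.extend f c (fun _ => none) x = some i ↔ ∃ a, c a = some i ∧ f a = x := by
  by_cases hx : ∃ a, f a = x
  · obtain ⟨a, rfl⟩ := hx
    simp [hf.extend_apply, hf.eq_iff]
  · rw [Function.extend_apply' _ _ _ hx]
    simp only [reduceCtorEq, false_iff]
    exact fun ⟨a, _, ha⟩ => hx ⟨a, ha⟩

theorem FiniteSeparation.extend (hc : FiniteSeparation G c) (f : G ↪g H)
    (hf : (Set.range f)ᶜ.Finite) :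
    FiniteSeparation H (Function.extend f c fun _ => none) where
  finite_separator := by
    refine ((hc.finite_separator.image f).union hf).subset fun x hx => ?_
    by_cases hxf : x ∈ Set.range f
    · obtain ⟨a, rfl⟩ := hxf
      exact .inl ⟨a, by rwa [Set.mem_ofPred_eq, f.injective.extend_apply] at hx, rfl⟩
    · exact .inr hxf
  eq_of_adj x y hxy i j hi hj := by
    obtain ⟨a, ha, rfl⟩ := (extend_none_eq_some_iff f.injective).1 hi
    obtain ⟨b, hb, rfl⟩ := (extend_none_eq_some_iff f.injective).1 hj
    exact hc.eq_of_adj (f.map_adj_iff.1 hxy) ha hb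

theorem FinitelyClosed.separationClosure_of_embedding (h : FinitelyClosed 𝒰) (f : G ↪g H)
    (hf : (Set.range f)ᶜ.Finite) (hG : separationClosure 𝒰 V G) : separationClosure 𝒰 W H := by
  obtain ⟨ι, c, hc, hcG⟩ := hG
  refine ⟨ι, _, hc.extend f hf, fun i => ?_⟩
  have hpiece : Function.extend f c (fun _ => none) ⁻¹' {some i} = f '' (c ⁻¹' {some i}) :=
    Set.ext fun x => extend_none_eq_some_iff f.injective
  rw [hpiece]
  exact h.induce_image f (hcG i)

theorem FiniteSeparation.sum (hc : FiniteSeparation G c) (hd : FiniteSeparation H d) :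
    FiniteSeparation (G.sum H) (Sum.elim (Option.map Sum.inl ∘ c) (Option.map Sum.inr ∘ d)) where
  finite_separator := by
    refine ((hc.finite_separator.image Sum.inl).union
      (hd.finite_separator.image Sum.inr)).subset ?_
    rintro (x | x) hx
    · exact .inl ⟨x, by simpa using hx, rfl⟩
    · exact .inr ⟨x, by simpa using hx, rfl⟩
  eq_of_adj := by
    rintro (x | x) (y | y) hxy i j hi hj
    · simp only [Sum.elim_inl, Function.comp_apply, Option.map_eq_some_iff] at hi hj
      obtain ⟨i, hi, rfl⟩ := hi
      obtain ⟨j, hj, rfl⟩ := hj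
      exact congrArg Sum.inl (hc.eq_of_adj hxy hi hj)
    · exact absurd hxy (by simp)
    · exact absurd hxy (by simp)
    · simp only [Sum.elim_inr, Function.comp_apply, Option.map_eq_some_iff] at hi hj
      obtain ⟨i, hi, rfl⟩ := hi
      obtain ⟨j, hj, rfl⟩ := hj
      exact congrArg Sum.inr (hd.eq_of_adj hxy hi hj)

theorem FinitelyClosed.separationClosure_sum (h : FinitelyClosed 𝒰)
    (hG : separationClosure 𝒰 V G) (hH : separationClosure 𝒰 W H) :
    separationClosure 𝒰 (V ⊕ W) (G.sum H) := by
  obtain ⟨ι, c, hc, hcG⟩ := hG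
  obtain ⟨κ, d, hd, hdH⟩ := hH
  refine ⟨ι ⊕ κ, _, hc.sum hd, ?_⟩
  rintro (i | i)
  · have hpiece : Sum.elim (Option.map Sum.inl ∘ c) (Option.map Sum.inr ∘ d) ⁻¹'
        {some (Sum.inl i)} = (SimpleGraph.Embedding.sumInl : G ↪g G.sum H) '' (c ⁻¹' {some i}) := by
      ext (x | x) <;> simp
    rw [hpiece]
    exact h.induce_image _ (hcG i)
  · have hpiece : Sum.elim (Option.map Sum.inl ∘ c) (Option.map Sum.inr ∘ d) ⁻¹'
        {some (Sum.inr i)} = (SimpleGraph.Embedding.sumInr : H ↪g G.sum H) '' (d ⁻¹' {some i}) := by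
      ext (x | x) <;> simp
    rw [hpiece]
    exact h.induce_image _ (hdH i)

theorem FinitelyClosed.finitelyClosed_separationClosure (h : FinitelyClosed 𝒰) :
    FinitelyClosed (separationClosure 𝒰) where
  iso_closed _ _ := fun ⟨f⟩ => h.separationClosure_of_embedding f.toEmbedding (by simp)
  sum_mem _ _ := h.separationClosure_sum
  addFinite_mem G T hT := by
    refine h.separationClosure_of_embedding (SimpleGraph.Embedding.induce Tᶜ) ?_
    change (Set.range Subtype.val)ᶜ.Finite
    rwa [Subtype.range_coe, compl_compl]

theorem FinitelyClosed.sUnion {S : Set GraphClass.{u}} (hS : IsChain (· ≤ ·) S)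
    (h : ∀ 𝒰 ∈ S, FinitelyClosed 𝒰) : FinitelyClosed (fun V G => ∃ 𝒰 ∈ S, 𝒰 V G) where
  iso_closed G H hGH := fun ⟨𝒰, h𝒰, hG⟩ => ⟨𝒰, h𝒰, (h 𝒰 h𝒰).iso_closed G H hGH hG⟩
  sum_mem G H := fun ⟨𝒰, h𝒰, hG⟩ ⟨𝒱, h𝒱, hH⟩ => by
    obtain h𝒰𝒱 | h𝒱𝒰 := hS.total h𝒰 h𝒱
    · exact ⟨𝒱, h𝒱, (h 𝒱 h𝒱).sum_mem G H (h𝒰𝒱 _ G hG) hH⟩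
    · exact ⟨𝒰, h𝒰, (h 𝒰 h𝒰).sum_mem G H hG (h𝒱𝒰 _ H hH)⟩
  addFinite_mem G T hT := fun ⟨𝒰, h𝒰, hG⟩ => ⟨𝒰, h𝒰, (h 𝒰 h𝒰).addFinite_mem G T hT hG⟩

theorem FinitelyClosed.exists_maximal_prePartitionable (h : FinitelyClosed 𝒰)
    (hpp : ∀ (V : Type u) (G : SimpleGraph V), 𝒰 V G → PrePartitionable G) :
    ∃ 𝒱, 𝒰 ≤ 𝒱 ∧ Maximal (fun 𝒱 : GraphClass.{u} => FinitelyClosed 𝒱 ∧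
      ∀ (V : Type u) (G : SimpleGraph V), 𝒱 V G → PrePartitionable G) 𝒱 := by
  refine zorn_le_nonempty₀ {𝒱 | FinitelyClosed 𝒱 ∧ ∀ V G, 𝒱 V G → PrePartitionable G}
    (fun S hS hchain _ _ => ⟨fun V G => ∃ 𝒱 ∈ S, 𝒱 V G, ⟨?_, ?_⟩, ?_⟩) 𝒰 ⟨h, hpp⟩
  · exact .sUnion hchain fun 𝒱 h𝒱 => (hS h𝒱).1
  · exact fun V G ⟨𝒱, h𝒱, hG⟩ => (hS h𝒱).2 V G hG
  · exact fun 𝒱 h𝒱 V G hG => ⟨𝒱, h𝒱, hG⟩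

theorem finiteSeparation_connectedComponentMk (G : SimpleGraph V) :
    FiniteSeparation G (some ∘ G.connectedComponentMk) where
  finite_separator := by simp
  eq_of_adj _ _ hxy _ _ hi hj := by
    rw [← Option.some.inj hi, ← Option.some.inj hj]
    exact SimpleGraph.ConnectedComponent.sound hxy.reachable

theorem FinitelyClosed.schmidtLevel_le (h : FinitelyClosed 𝒱) (hsep : separationClosure 𝒱 ≤ 𝒱)
    (h𝒰 : 𝒰 ≤ 𝒱) (μ : Ordinal.{u}) : SchmidtLevel 𝒰 μ ≤ 𝒱 := by
  induction μ using WellFoundedLT.induction with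
  | ind μ ih =>
    intro V G hG
    rw [SchmidtLevel] at hG
    split_ifs at hG with hμ
    · exact h𝒰 V G hG
    obtain ⟨S, hS, hcomp⟩ := hG
    refine h.addFinite_mem G S hS (hsep _ _ ⟨_, _, finiteSeparation_connectedComponentMk _, ?_⟩)
    intro C
    obtain ⟨lam, hlam, hC⟩ := hcomp C
    have hpiece : some ∘ (G.induce Sᶜ).connectedComponentMk ⁻¹' {some C} = C.supp := by
      ext x; simp
    rw [hpiece]
    exact ih lam hlam _ _ hC

end GraphClass

/-- Main theorem: if `𝒰` is a finitely closed class all of whose members are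
pre-partitionable, then every graph in the Schmidt closure of `𝒰` is pre-partitionable. -/
theorem schmidtClosure_prePartitionable (𝒰 : GraphClass.{u}) (h𝒰 : FinitelyClosed 𝒰)
    (hpp : ∀ (V : Type u) (G : SimpleGraph V), 𝒰 V G → PrePartitionable G)
    {V : Type u} (G : SimpleGraph V) (hG : InSchmidtClosure 𝒰 G) :
    PrePartitionable G := by
  obtain ⟨𝒱, h𝒰𝒱, h𝒱⟩ := h𝒰.exists_maximal_prePartitionable hpp
  obtain ⟨hclosed, h𝒱pp⟩ := h𝒱.prop
  have hsep : separationClosure 𝒱 ≤ 𝒱 :=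
    h𝒱.le_of_ge ⟨hclosed.finitelyClosed_separationClosure,
      fun _ _ => hclosed.prePartitionable_of_separationClosure h𝒱pp⟩ hclosed.le_separationClosure
  obtain ⟨μ, hμ⟩ := hG
  exact h𝒱pp V G (hclosed.schmidtLevel_le hsep h𝒰𝒱 μ V G hμ)
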